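/- For every even natural number n ≥ 2 there exists an n×n integer matrix F with the following properties: (i) det F = 1; (ii) det(F − I) = 1; (iii) there is no n×n integer matrix G with det G = −1 such that F·G = G·F; (iv) for the (integer) inverse matrix F⁻¹ of F, there is no n×n integer matrix G with det G = 1 such that G·F = F⁻¹·G. -/

import Mathlib

/-!
Let `F` be an integer matrix of even size `n` with characteristic polynomial
`p = X ^ n - X + 1`. Both `det F` and `det (F - 1)` are values of `p`.

The polynomial `p` has no real root, so `F` has no real eigenvalue. If `G` had negative
determinant, some real eigenvalue of `G` would have odd algebraic multiplicity; if moreover `G`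
commuted with `F`, then `F` would preserve the corresponding odd-dimensional generalized eigenspace
and would have a real eigenvalue on it.

If `G * F = F⁻¹ * G` with `det G ≠ 0`, then `F` and `F⁻¹` have the same characteristic polynomial,
so `p` equals its reverse `X ^ n - X ^ (n - 1) + 1`, which forces `n = 2`. For `n = 2`, `F⁻¹` is the
adjugate of `F`, and `det G` is, up to a positive factor, the value of a negative definite quadratic
form whose discriminant is that of `F`.
-/

open Matrix Module Polynomial

section RealPolynomial

lemma exists_isRoot_of_odd_natDegree {p : ℝ[X]} (hp : Odd p.natDegree) : ∃ x, p.IsRoot x := by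
  wlog hlc : 0 ≤ p.leadingCoeff generalizing p
  · simpa using this (p := -p) (by simpa using hp) (by simpa using (not_le.mp hlc).le)
  by_contra! hroot
  have hpos : 0 < p.eval 0 :=
    zero_lt_eval_of_roots_lt_of_leadingCoeff_nonneg (fun y hy ↦ (hroot y hy).elim) hlc
  have hneg : 0 < Int.negOnePow p.natDegree * p.eval 0 :=
    zero_lt_negOnePow_mul_eval_of_lt_roots_of_leadingCoeff_nonneg
      (fun y hy ↦ (hroot y hy).elim) hlc
  rw [Int.negOnePow_odd _ (mod_cast hp)] at hneg
  push_cast at hneg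
  linarith

lemma exists_odd_rootMultiplicity_of_eval_neg {p : ℝ[X]} (hlc : 0 ≤ p.leadingCoeff) {x : ℝ}
    (hx : p.eval x < 0) : ∃ r, Odd (p.rootMultiplicity r) := by
  by_contra! heven
  simp only [Nat.not_odd_iff_even] at heven
  obtain ⟨q, hpq, -, hq⟩ := exists_prod_multiset_X_sub_C_mul p
  have hq0 : q ≠ 0 := by
    rintro rfl
    rw [← hpq, mul_zero, eval_zero] at hx
    exact lt_irrefl 0 hx
  have hq_pos : 0 < q.eval x := by
    refine zero_lt_eval_of_roots_lt_of_leadingCoeff_nonneg (fun y hy ↦ ?_) ?_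
    · simpa [hq] using (mem_roots hq0).mpr hy
    · rwa [← leadingCoeff_monic_mul (monic_multisetProd_X_sub_C p.roots), hpq]
  have hprod : 0 ≤ ((p.roots.map fun a ↦ X - C a).prod).eval x := by
    rw [eval_multiset_prod, Multiset.map_map, Finset.prod_multiset_map_count]
    refine Finset.prod_nonneg fun a _ ↦ Even.pow_nonneg ?_ _
    rw [count_roots]
    exact heven a
  rw [← hpq, eval_mul] at hx
  exact hx.not_ge (mul_nonneg hprod hq_pos.le)

end RealPolynomial

section RealEndomorphism

lemma hasEigenvalue_of_hasEigenvalue_restrict {R M : Type*} [CommRing R] [AddCommGroup M]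
    [Module R M] {f : End R M} {N : Submodule R M} (hN : ∀ x ∈ N, f x ∈ N) {μ : R}
    (hμ : End.HasEigenvalue (f.restrict hN) μ) : f.HasEigenvalue μ := by
  obtain ⟨x, hx, hx0⟩ := hμ.exists_hasEigenvector
  exact End.hasEigenvalue_of_hasEigenvector
    ⟨End.eigenspace_restrict_le_eigenspace f hN μ ⟨x, hx, rfl⟩, by simpa using hx0⟩

variable {V : Type*} [AddCommGroup V] [Module ℝ V]

lemma exists_hasEigenvalue_of_odd_finrank (hV : Odd (finrank ℝ V)) (f : End ℝ V) :
    ∃ μ, f.HasEigenvalue μ := by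
  have : FiniteDimensional ℝ V := finite_of_finrank_pos hV.pos
  simp only [End.hasEigenvalue_iff_isRoot_charpoly]
  exact exists_isRoot_of_odd_natDegree (by rwa [f.charpoly_natDegree])

lemma exists_hasEigenvalue_of_commute_of_det_neg [FiniteDimensional ℝ V] {f g : End ℝ V}
    (hfg : Commute f g) (hg : LinearMap.det g < 0) : ∃ μ, f.HasEigenvalue μ := by
  rcases (finrank ℝ V).even_or_odd with hV | hV
  · have hneg : g.charpoly.eval 0 < 0 := by
      rwa [g.det_eq_sign_charpoly_coeff, hV.neg_one_pow, one_mul, coeff_zero_eq_eval_zero] at hg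
    obtain ⟨r, hr⟩ :=
      exists_odd_rootMultiplicity_of_eval_neg (by simp [g.charpoly_monic.leadingCoeff]) hneg
    rw [← LinearMap.finrank_maxGenEigenspace_eq] at hr
    obtain ⟨μ, hμ⟩ := exists_hasEigenvalue_of_odd_finrank hr
      (f.restrict (End.mapsTo_maxGenEigenspace_of_comm hfg.symm r))
    exact ⟨μ, hasEigenvalue_of_hasEigenvalue_restrict _ hμ⟩
  · exact exists_hasEigenvalue_of_odd_finrank hV f

end RealEndomorphism

section Matrix

variable {ι R : Type*} [Fintype ι] [DecidableEq ι] [CommRing R]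

lemma det_nonneg_of_commute_of_charpoly_eval_ne_zero {A B : Matrix ι ι ℝ} (hAB : Commute A B)
    (hA : ∀ x, A.charpoly.eval x ≠ 0) : 0 ≤ B.det := by
  by_contra! hB
  have hcomm : Commute (toLin' A) (toLin' B) := hAB.map toLinAlgEquiv'
  obtain ⟨μ, hμ⟩ := exists_hasEigenvalue_of_commute_of_det_neg hcomm (by rwa [LinearMap.det_toLin'])
  rw [End.hasEigenvalue_iff_isRoot_charpoly, charpoly_toLin'] at hμ
  exact hA μ hμ

lemma det_sub_scalar_of_even_card (hι : Even (Fintype.card ι)) (A : Matrix ι ι R) (t : R) :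
    (A - scalar ι t).det = A.charpoly.eval t := by
  rw [eval_charpoly, ← neg_sub, det_neg, hι.neg_one_pow, one_mul]

lemma charpoly_eq_of_semiconjBy [IsDomain R] {G A B : Matrix ι ι R} (hG : G.det ≠ 0)
    (h : SemiconjBy G A B) : A.charpoly = B.charpoly := by
  have hchar : C.mapMatrix G * A.charmatrix = B.charmatrix * C.mapMatrix G := by
    rw [charmatrix, charmatrix, mul_sub, sub_mul, ← map_mul, ← map_mul, h.eq,
      (scalar_commute X (Commute.all X) (C.mapMatrix G)).eq]
  have hdet := congrArg det hchar
  rw [det_mul, det_mul, mul_comm, ← RingHom.map_det] at hdet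
  exact mul_right_cancel₀ (C_ne_zero.mpr hG) hdet

lemma charpoly_inv_of_det_eq_one (hι : Even (Fintype.card ι)) {A : Matrix ι ι R}
    (hA : A.det = 1) : A⁻¹.charpoly = A.charpoly.reverse := by
  have hunit : IsUnit A := (isUnit_iff_isUnit_det A).mpr (hA ▸ isUnit_one)
  rw [charpoly_inv A hunit, hι.neg_one_pow, hA, Ring.inverse_one, C_1, one_mul, one_mul,
    reverse_charpoly]

lemma exists_charpoly_eq [Nontrivial R] {p : R[X]} (hp : p.Monic) {n : ℕ}
    (hn : p.natDegree = n) : ∃ A : Matrix (Fin n) (Fin n) R, A.charpoly = p := by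
  subst hn
  let b : Basis (Fin p.natDegree) R (AdjoinRoot p) := (AdjoinRoot.powerBasis' hp).basis
  let A := Algebra.leftMulMatrix b (AdjoinRoot.root p)
  have hdvd : p ∣ A.charpoly := by
    rw [← AdjoinRoot.mk_eq_zero, ← AdjoinRoot.aeval_eq]
    apply Algebra.leftMulMatrix_injective b
    rw [← aeval_algHom_apply, map_zero]
    exact aeval_self_charpoly A
  exact ⟨A, eq_of_monic_of_dvd_of_natDegree_le hp A.charpoly_monic hdvd (by simp)⟩

/- With `A = !![a, b; c, d]` and `G = !![p, q; r, s]`, the hypothesis gives `s = -p` and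
`b * r = -((a - d) * p + c * q)`, whence
`4 * b ^ 2 * det G = discr A * q ^ 2 - (2 * b * p - (a - d) * q) ^ 2`. -/
lemma det_nonpos_of_semiconjBy_adjugate [LinearOrder R] [IsStrictOrderedRing R]
    {G A : Matrix (Fin 2) (Fin 2) R} (hA : A.discr < 0) (h : SemiconjBy G A A.adjugate) :
    G.det ≤ 0 := by
  have h00 := congrFun₂ h.eq 0 0
  have h01 := congrFun₂ h.eq 0 1
  simp only [adjugate_fin_two, mul_apply, Fin.sum_univ_two, of_apply, cons_val', cons_val_zero,
    cons_val_one, cons_val_fin_one] at h00 h01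
  rw [discr_fin_two, trace_fin_two, det_fin_two] at hA
  have hb : A 0 1 ≠ 0 := fun hb ↦ by
    rw [hb] at hA
    nlinarith [sq_nonneg (A 0 0 - A 1 1)]
  have htrace : G 1 1 = -G 0 0 := mul_left_cancel₀ hb (by linear_combination h01)
  have hdet : 4 * A 0 1 ^ 2 * G.det =
      ((A 0 0 + A 1 1) ^ 2 - 4 * (A 0 0 * A 1 1 - A 0 1 * A 1 0)) * G 0 1 ^ 2
        - (2 * A 0 1 * G 0 0 - (A 0 0 - A 1 1) * G 0 1) ^ 2 := by
    rw [det_fin_two, htrace]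
    linear_combination (-4 * A 0 1 * G 0 1) * h00
  have hnonpos : 4 * A 0 1 ^ 2 * G.det ≤ 0 := by
    rw [hdet]
    nlinarith [mul_nonneg (neg_nonneg.mpr hA.le) (sq_nonneg (G 0 1)),
      sq_nonneg (2 * A 0 1 * G 0 0 - (A 0 0 - A 1 1) * G 0 1)]
  exact nonpos_of_mul_nonpos_right hnonpos (by positivity)

end Matrix

section Trinomial

variable {R : Type*} [CommRing R] {n : ℕ}

lemma X_pow_sub_X_add_one_eq_trinomial :
    (X ^ n - X + 1 : R[X]) = trinomial 0 1 n 1 (-1) 1 := by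
  simp only [trinomial_def, map_one, map_neg]
  ring

lemma monic_X_pow_sub_X_add_one (hn : 1 < n) : (X ^ n - X + 1 : R[X]).Monic := by
  rw [X_pow_sub_X_add_one_eq_trinomial]
  exact trinomial_monic zero_lt_one hn

lemma natDegree_X_pow_sub_X_add_one [Nontrivial R] (hn : 1 < n) :
    (X ^ n - X + 1 : R[X]).natDegree = n := by
  rw [X_pow_sub_X_add_one_eq_trinomial]
  exact trinomial_natDegree zero_lt_one hn one_ne_zero

lemma reverse_X_pow_sub_X_add_one_ne [Nontrivial R] (hn : 2 < n) :
    (X ^ n - X + 1 : R[X]).reverse ≠ X ^ n - X + 1 := by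
  intro h
  have hcoeff := congrArg (coeff · 1) h
  simp only [coeff_reverse, natDegree_X_pow_sub_X_add_one (R := R) (one_lt_two.trans hn),
    revAt_le (one_lt_two.trans hn).le] at hcoeff
  simp [coeff_X_pow, coeff_X, coeff_one, show n - 1 ≠ n by lia, show 1 ≠ n - 1 by lia,
    show n - 1 ≠ 0 by lia, show 1 ≠ n by lia] at hcoeff

lemma pow_sub_self_add_one_pos [LinearOrder R] [IsStrictOrderedRing R]
    (hn : n ≠ 0) (hne : Even n) (a : R) : 0 < a ^ n - a + 1 := by
  rcases lt_or_ge a 1 with ha | ha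
  · linarith [hne.pow_nonneg a]
  · linarith [le_self_pow₀ ha hn]

end Trinomial

section CharpolyTrinomial

variable {n : ℕ} {F G : Matrix (Fin n) (Fin n) ℤ}

lemma det_sub_scalar_of_charpoly_eq (hne : Even n) (hF : F.charpoly = X ^ n - X + 1) (t : ℤ) :
    (F - scalar (Fin n) t).det = t ^ n - t + 1 := by
  rw [det_sub_scalar_of_even_card (by simpa using hne), hF]
  simp

lemma det_eq_one_of_charpoly_eq (hn : n ≠ 0) (hne : Even n) (hF : F.charpoly = X ^ n - X + 1) :
    F.det = 1 := by
  simpa [hn] using det_sub_scalar_of_charpoly_eq hne hF 0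

lemma det_sub_one_eq_one_of_charpoly_eq (hne : Even n) (hF : F.charpoly = X ^ n - X + 1) :
    (F - 1).det = 1 := by
  simpa using det_sub_scalar_of_charpoly_eq hne hF 1

lemma det_nonneg_of_commute_of_charpoly_eq (hn : n ≠ 0) (hne : Even n)
    (hF : F.charpoly = X ^ n - X + 1) (h : Commute F G) : 0 ≤ G.det := by
  let toReal := (Int.castRingHom ℝ).mapMatrix (m := Fin n)
  have hroot (x : ℝ) : (toReal F).charpoly.eval x ≠ 0 := by
    rw [RingHom.mapMatrix_apply, charpoly_map, hF]
    simpa using (pow_sub_self_add_one_pos hn hne x).ne'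
  have hreal : 0 ≤ (toReal G).det :=
    det_nonneg_of_commute_of_charpoly_eval_ne_zero (h.map toReal) hroot
  rw [← RingHom.map_det, eq_intCast] at hreal
  exact_mod_cast hreal

lemma det_nonpos_of_semiconjBy_inv_of_charpoly_eq (hn : 2 ≤ n) (hne : Even n)
    (hF : F.charpoly = X ^ n - X + 1) (h : SemiconjBy G F F⁻¹) : G.det ≤ 0 := by
  have hdet : F.det = 1 := det_eq_one_of_charpoly_eq (by lia) hne hF
  rcases hn.eq_or_lt with rfl | hn
  · have hdiscr : F.discr = -3 := by
      have htrace : F.trace = 1 := by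
        rw [trace_eq_neg_charpoly_coeff, hF]
        simp [coeff_one, coeff_X_pow]
      rw [discr_fin_two, htrace, hdet]
      norm_num
    refine det_nonpos_of_semiconjBy_adjugate (A := F) (by rw [hdiscr]; norm_num) ?_
    rwa [inv_def, hdet, Ring.inverse_one, one_smul] at h
  · by_contra! hG
    have hrev := charpoly_eq_of_semiconjBy hG.ne' h
    rw [charpoly_inv_of_det_eq_one (by simpa using hne) hdet, hF] at hrev
    exact reverse_X_pow_sub_X_add_one_ne hn hrev.symm

end CharpolyTrinomial

theorem stmt8_general {n : ℕ} (hn : 2 ≤ n) (hne : Even n) {F : Matrix (Fin n) (Fin n) ℤ}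
    (hF : F.charpoly = X ^ n - X + 1) :
    F.det = 1 ∧
      (F - 1).det = 1 ∧
      (∀ G, Commute F G → 0 ≤ G.det) ∧
      (∀ G, SemiconjBy G F F⁻¹ → G.det ≤ 0) :=
  have hn0 : n ≠ 0 := by lia
  ⟨det_eq_one_of_charpoly_eq hn0 hne hF, det_sub_one_eq_one_of_charpoly_eq hne hF,
    fun _ ↦ det_nonneg_of_commute_of_charpoly_eq hn0 hne hF,
    fun _ ↦ det_nonpos_of_semiconjBy_inv_of_charpoly_eq hn hne hF⟩

/-- For every even `n ≥ 2` there is an integer `n × n` matrix `F` with `det F = 1`,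
`det (F - 1) = 1`, no integer matrix `G` with `det G = -1` commutes with `F`, and
no integer matrix `G` with `det G = 1` satisfies `G * F = F⁻¹ * G`. -/
theorem stmt8 (n : ℕ) (hn : 2 ≤ n) (hne : Even n) :
    ∃ F : Matrix (Fin n) (Fin n) ℤ,
      F.det = 1 ∧
      (F - 1).det = 1 ∧
      (¬ ∃ G : Matrix (Fin n) (Fin n) ℤ, G.det = -1 ∧ F * G = G * F) ∧
      (¬ ∃ G : Matrix (Fin n) (Fin n) ℤ, G.det = 1 ∧ G * F = F⁻¹ * G) := by
  obtain ⟨F, hF⟩ :=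
    exists_charpoly_eq (monic_X_pow_sub_X_add_one (R := ℤ) hn) (natDegree_X_pow_sub_X_add_one hn)
  obtain ⟨hdet, hdet_sub, hcomm, hinv⟩ := stmt8_general hn hne hF
  exact ⟨F, hdet, hdet_sub, fun ⟨G, hG, h⟩ ↦ by linarith [hcomm G h],
    fun ⟨G, hG, h⟩ ↦ by linarith [hinv G h]⟩
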